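/- The logic ⊩_⊞ permits cancellation: if (X_k)_{k∈K} and (Y_k)_{k∈K} are families of sets of formulas such that for i ≠ j the variables occurring in X_i ∪ Y_i are disjoint from those occurring in X_j ∪ Y_j, and ⋃_k X_k ⊩_⊞ ⋃_k Y_k, then X_i ⊩_⊞ Y_i for some index i. -/

import Mathlib

/-- Formulas built from countably many propositional variables with a single
binary connective `⊞` (platypus). -/
inductive Fm : Type where
  | var : ℕ → Fm
  | pl : Fm → Fm → Fm
deriving DecidableEq

namespace Fm

/-- The set of propositional variables occurring in a formula. -/
def vars : Fm → Set ℕ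
  | var n => {n}
  | pl a b => vars a ∪ vars b

/-- A `𝔅_⊞`-valuation: a two-valued function such that
`v (φ ⊞ ψ) ∈ {min (v φ) (v ψ), max (v φ) (v ψ)}`. -/
def IsVal (v : Fm → Bool) : Prop :=
  ∀ a b : Fm, v (a.pl b) = (v a && v b) ∨ v (a.pl b) = (v a || v b)

/-- The multiple-conclusion consequence `Γ ⊩_⊞ Δ`. -/
def Mc (Γ Δ : Set Fm) : Prop :=
  ∀ v : Fm → Bool, IsVal v → (∀ φ ∈ Γ, v φ = true) → ∃ ψ ∈ Δ, v ψ = true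

/-- The single-conclusion consequence `Γ ⊢_⊞ φ`. -/
def Sc (Γ : Set Fm) (φ : Fm) : Prop := Mc Γ {φ}

end Fm

/-!
A partial valuation defined on a set of formulas closed under subformulas extends to a total one:
outside that set, compute `⊞` as conjunction. Hence partial valuations on subformula-closed sets
that agree on overlaps can be glued. Formulas over disjoint sets of variables form disjoint
subformula-closed sets, because every formula contains a variable. So if `X i ⊩ Y i` fails for
every `i`, the countermodels glue to a single countermodel of `⋃ k, X k ⊩ ⋃ k, Y k`.
-/

theorem exists_eqOn_of_pairwise_eqOn {ι : Sort*} {α β : Type*} [Nonempty β] {S : ι → Set α}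
    {u : ι → α → β} (hu : ∀ i j, Set.EqOn (u i) (u j) (S i ∩ S j)) :
    ∃ f : α → β, ∀ i, Set.EqOn f (u i) (S i) := by
  have exists_value (x : α) : ∃ y, ∀ i, x ∈ S i → y = u i x := by
    by_cases hx : ∃ i, x ∈ S i
    · obtain ⟨i, hi⟩ := hx
      exact ⟨u i x, fun j hj => hu i j ⟨hi, hj⟩⟩
    · exact ⟨Classical.arbitrary β, fun i hi => absurd ⟨i, hi⟩ hx⟩
  choose f hf using exists_value
  exact ⟨f, fun i x hx => hf x i hx⟩

namespace Fm

theorem vars_nonempty (φ : Fm) : φ.vars.Nonempty := by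
  induction φ with
  | var n => exact Set.singleton_nonempty n
  | pl a b iha _ => exact iha.mono Set.subset_union_left

theorem not_mc_iff {Γ Δ : Set Fm} :
    ¬ Mc Γ Δ ↔ ∃ v, IsVal v ∧ (∀ φ ∈ Γ, v φ = true) ∧ ∀ ψ ∈ Δ, v ψ = false := by
  simp only [Mc, not_forall, not_exists, not_and, Bool.not_eq_true, exists_prop]

/-- A set of formulas closed under immediate, hence all, subformulas: a domain on which a partial
valuation makes sense. -/
def SubformulaClosed (D : Set Fm) : Prop :=
  ∀ a b : Fm, a.pl b ∈ D → a ∈ D ∧ b ∈ D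

/-- Partial `𝔅_⊞`-valuations: `f` satisfies the valuation condition at the compound formulas
in `D`. The values of `f` are meant to be read only on `D`, for `D` closed under subformulas. -/
def IsValOn (D : Set Fm) (f : Fm → Bool) : Prop :=
  ∀ a b : Fm, a.pl b ∈ D → f (a.pl b) = (f a && f b) ∨ f (a.pl b) = (f a || f b)

theorem SubformulaClosed.iUnion {ι : Sort*} {S : ι → Set Fm} (hS : ∀ i, SubformulaClosed (S i)) :
    SubformulaClosed (⋃ i, S i) := by
  intro a b hab
  obtain ⟨i, hi⟩ := Set.mem_iUnion.1 hab
  exact (hS i a b hi).imp (Set.mem_iUnion_of_mem i) (Set.mem_iUnion_of_mem i)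

theorem IsValOn.congr {D : Set Fm} {f g : Fm → Bool} (hg : IsValOn D g)
    (hD : SubformulaClosed D) (hfg : Set.EqOn f g D) : IsValOn D f := by
  intro a b hab
  obtain ⟨ha, hb⟩ := hD a b hab
  rw [hfg hab, hfg ha, hfg hb]
  exact hg a b hab

theorem IsValOn.iUnion {ι : Sort*} {S : ι → Set Fm} {f : Fm → Bool}
    (hf : ∀ i, IsValOn (S i) f) : IsValOn (⋃ i, S i) f := by
  intro a b hab
  obtain ⟨i, hi⟩ := Set.mem_iUnion.1 hab
  exact hf i a b hi

open Classical in
/-- The extension of a partial valuation `f` on `D` to all formulas that interprets `⊞` as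
conjunction outside `D`. Variables outside `D` are unconstrained and keep their value under `f`. -/
noncomputable def extendByAnd (D : Set Fm) (f : Fm → Bool) : Fm → Bool
  | var n => f (var n)
  | pl a b => if a.pl b ∈ D then f (a.pl b) else extendByAnd D f a && extendByAnd D f b

theorem eqOn_extendByAnd (D : Set Fm) (f : Fm → Bool) : Set.EqOn (extendByAnd D f) f D := by
  rintro (n | ⟨a, b⟩) hD
  · rfl
  · exact if_pos hD

theorem IsValOn.isVal_extendByAnd {D : Set Fm} {f : Fm → Bool} (hf : IsValOn D f)
    (hD : SubformulaClosed D) : IsVal (extendByAnd D f) := by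
  intro a b
  by_cases hab : a.pl b ∈ D
  · exact hf.congr hD (eqOn_extendByAnd D f) a b hab
  · exact Or.inl (if_neg hab)

theorem exists_isVal_eqOn {ι : Sort*} {S : ι → Set Fm} {u : ι → Fm → Bool}
    (hS : ∀ i, SubformulaClosed (S i)) (hu : ∀ i, IsValOn (S i) (u i))
    (hcompat : ∀ i j, Set.EqOn (u i) (u j) (S i ∩ S j)) :
    ∃ v, IsVal v ∧ ∀ i, Set.EqOn v (u i) (S i) := by
  obtain ⟨f, hf⟩ := exists_eqOn_of_pairwise_eqOn hcompat
  have hf_val : IsValOn (⋃ i, S i) f := .iUnion fun i => (hu i).congr (hS i) (hf i)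
  exact ⟨extendByAnd (⋃ i, S i) f, hf_val.isVal_extendByAnd (.iUnion hS), fun i =>
    ((eqOn_extendByAnd _ f).mono (Set.subset_iUnion S i)).trans (hf i)⟩

/-- The formulas whose variables all lie in `V`, the domain of the partial valuation contributed
by a family member with variables `V`. -/
def formulasOver (V : Set ℕ) : Set Fm := {φ | φ.vars ⊆ V}

theorem subformulaClosed_formulasOver (V : Set ℕ) : SubformulaClosed (formulasOver V) :=
  fun _ _ hab => Set.union_subset_iff.1 hab

theorem disjoint_formulasOver {V W : Set ℕ} (hVW : Disjoint V W) :
    Disjoint (formulasOver V) (formulasOver W) :=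
  Set.disjoint_left.2 fun φ hV hW =>
    φ.vars_nonempty.ne_empty (disjoint_self.1 (hVW.mono hV hW))

theorem subset_formulasOver_biUnion_vars (Γ : Set Fm) :
    Γ ⊆ formulasOver (⋃ φ ∈ Γ, φ.vars) :=
  fun _ hφ => Set.subset_biUnion_of_mem (u := vars) hφ

theorem exists_isVal_eqOn_formulasOver {ι : Type*} {V : ι → Set ℕ} {u : ι → Fm → Bool}
    (hV : Pairwise (Function.onFun Disjoint V)) (hu : ∀ i, IsVal (u i)) :
    ∃ v, IsVal v ∧ ∀ i, Set.EqOn v (u i) (formulasOver (V i)) := by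
  refine exists_isVal_eqOn (fun i => subformulaClosed_formulasOver (V i))
    (fun i a b _ => hu i a b) fun i j => ?_
  rcases eq_or_ne i j with rfl | hij
  · exact Set.eqOn_refl _ _
  · rw [(disjoint_formulasOver (hV hij)).inter_eq]
    exact Set.eqOn_empty _ _

end Fm

open Fm in
theorem platypus_cancellation_general {ι : Type*} (X Y : ι → Set Fm)
    (hdisj : Pairwise (Function.onFun Disjoint fun i => ⋃ φ ∈ X i ∪ Y i, φ.vars))
    (h : Mc (⋃ i, X i) (⋃ i, Y i)) :
    ∃ i, Mc (X i) (Y i) := by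
  by_contra! hcounter
  choose u hu hX hY using fun i => not_mc_iff.1 (hcounter i)
  obtain ⟨v, hv, hvu⟩ := exists_isVal_eqOn_formulasOver hdisj hu
  have v_eq (i : ι) : Set.EqOn v (u i) (X i ∪ Y i) :=
    (hvu i).mono (subset_formulasOver_biUnion_vars _)
  refine not_mc_iff.2 ⟨v, hv, fun φ hφ => ?_, fun ψ hψ => ?_⟩ h
  · obtain ⟨i, hi⟩ := Set.mem_iUnion.1 hφ
    exact (v_eq i (Or.inl hi)).trans (hX i φ hi)
  · obtain ⟨i, hi⟩ := Set.mem_iUnion.1 hψ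
    exact (v_eq i (Or.inr hi)).trans (hY i ψ hi)

open Fm in
/-- `⊩_⊞` permits cancellation: for families `(X k)`, `(Y k)` of
sets of formulas with pairwise disjoint variables, if `⋃ k, X k ⊩_⊞ ⋃ k, Y k`
then `X i ⊩_⊞ Y i` for some `i`. -/
theorem platypus_cancellation {K : Type} (X Y : K → Set Fm)
    (hdisj : ∀ i j : K, i ≠ j →
      (⋃ φ ∈ X i ∪ Y i, φ.vars) ∩ (⋃ φ ∈ X j ∪ Y j, φ.vars) = ∅)
    (h : Mc (⋃ k, X k) (⋃ k, Y k)) :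
    ∃ i, Mc (X i) (Y i) :=
  platypus_cancellation_general X Y
    (fun i j hij => Set.disjoint_iff_inter_eq_empty.2 (hdisj i j hij)) h
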